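/- Let λ ∈ ℤ_p and let ℓ be a positive integer. Then the vector I^ℓ(z,λ) satisfies the KZ equations modulo p^s: (i) for all i ≠ j in {1,…,2g+1}, (z_i−z_j)·(∂I^ℓ_j/∂z_i)(z,λ) ≡ (1/2)·(I^ℓ_i(z,λ) − I^ℓ_j(z,λ)) (mod p^s) as polynomials in z over ℤ_p; and (ii) for each i, ∏_{j≠i}(z_i−z_j)·(∂I^ℓ_i/∂z_i)(z,λ) ≡ pλ·∏_{j≠i}(z_i−z_j)·I^ℓ_i(z,λ) − (1/2)·Σ_{j≠i} ∏_{k≠i,j}(z_i−z_k)·(I^ℓ_i(z,λ) − I^ℓ_j(z,λ)) (mod p^s) as polynomials in z over ℤ_p. Here 1/2 denotes the inverse of 2 in ℤ_p. -/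

import Mathlib

open MvPolynomial

/-- The truncation order `d(s) = ⌊s(p−1)/(p−2)⌋ + 1`. -/
def dTrunc (p s : ℕ) : ℕ := s * (p - 1) / (p - 2) + 1

/-- `E_s(pλt)` as a polynomial in `t` over `ℚ_p[z₁,…,z_{2g+1}]`, for a fixed `λ ∈ ℤ_p`. -/
noncomputable def EsP (p : ℕ) [Fact p.Prime] (s g : ℕ) (lam : ℤ_[p]) :
    Polynomial (MvPolynomial (Fin (2 * g + 1)) ℚ_[p]) :=
  ∑ k ∈ Finset.range (dTrunc p s + 1),
    Polynomial.C (MvPolynomial.C ((p : ℚ_[p]) ^ k * (lam : ℚ_[p]) ^ k / (k.factorial : ℚ_[p]))) *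
      Polynomial.X ^ k

/-- The `i`-th component `Ψ_{s,i}(t,z,λ) = E_s(pλt)·Φ_s^o(t,z)/(t−z_i)`, where
`Φ_s^o(t,z) = ∏_{j=1}^{2g+1}(t−z_j)^{(p^s−1)/2}`, as a polynomial in `t` over
`ℚ_p[z₁,…,z_{2g+1}]`. -/
noncomputable def PsiComp (p : ℕ) [Fact p.Prime] (s g : ℕ) (lam : ℤ_[p])
    (i : Fin (2 * g + 1)) : Polynomial (MvPolynomial (Fin (2 * g + 1)) ℚ_[p]) :=
  EsP p s g lam *
    (Polynomial.X - Polynomial.C (X i)) ^ ((p ^ s - 1) / 2 - 1) *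
    ∏ j ∈ Finset.univ.erase i, (Polynomial.X - Polynomial.C (X j)) ^ ((p ^ s - 1) / 2)

/-- `I^ℓ_i(z,λ)`: the coefficient of `t^{ℓp^s−1}` in `Ψ_{s,i}(t,z,λ)`. -/
noncomputable def Isol (p : ℕ) [Fact p.Prime] (s g : ℕ) (lam : ℤ_[p]) (l : ℕ)
    (i : Fin (2 * g + 1)) : MvPolynomial (Fin (2 * g + 1)) ℚ_[p] :=
  (PsiComp p s g lam i).coeff (l * p ^ s - 1)


/-- The subring of polynomials with `p`-adic integer coefficients. -/
noncomputable def KZint (p : ℕ) [Fact p.Prime] (n : ℕ) : Subring (MvPolynomial (Fin n) ℚ_[p]) :=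
  (MvPolynomial.map (σ := Fin n) (PadicInt.Coe.ringHom (p := p))).range

/-- Polynomials in `t` with coefficients in `KZint`. -/
noncomputable def KZintT (p : ℕ) [Fact p.Prime] (n : ℕ) :
    Subring (Polynomial (MvPolynomial (Fin n) ℚ_[p])) :=
  Polynomial.liftsRing (MvPolynomial.map (σ := Fin n) (PadicInt.Coe.ringHom (p := p)))

/-- Coefficientwise partial derivative. -/
noncomputable def KZD (p : ℕ) [Fact p.Prime] (n : ℕ) (i : Fin n) :
    Derivation ℚ_[p] (Polynomial (MvPolynomial (Fin n) ℚ_[p]))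
      (Polynomial (MvPolynomial (Fin n) ℚ_[p])) :=
  PolynomialModule.equivPolynomialSelf.compDer (pderiv i).mapCoeffs

section
variable {p : ℕ} [Fact p.Prime] {n : ℕ}

lemma KZD_coeff (i : Fin n) (P : Polynomial (MvPolynomial (Fin n) ℚ_[p])) (m : ℕ) :
    (KZD p n i P).coeff m = pderiv i (P.coeff m) := rfl

lemma KZD_X (i : Fin n) : KZD p n i Polynomial.X = 0 := by
  ext1 m
  rw [KZD_coeff, Polynomial.coeff_X]
  split_ifs <;> simp

lemma KZD_C (i : Fin n) (a : MvPolynomial (Fin n) ℚ_[p]) :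
    KZD p n i (Polynomial.C a) = Polynomial.C (pderiv i a) := by
  ext1 m
  rw [KZD_coeff, Polynomial.coeff_C, Polynomial.coeff_C]
  split_ifs <;> simp

lemma KZD_lin (i j : Fin n) :
    KZD p n i (Polynomial.X - Polynomial.C (X j)) = if i = j then -1 else 0 := by
  rw [map_sub, KZD_X, KZD_C, pderiv_X, Pi.single_apply]
  by_cases h : i = j <;> simp [h, eq_comm]

lemma KZint_C {a : ℚ_[p]} (ha : ‖a‖ ≤ 1) : (C a : MvPolynomial (Fin n) ℚ_[p]) ∈ KZint p n :=
  ⟨C (⟨a, ha⟩ : ℤ_[p]), MvPolynomial.map_C _ _⟩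

lemma KZint_X (i : Fin n) : (X i : MvPolynomial (Fin n) ℚ_[p]) ∈ KZint p n :=
  ⟨X i, by simp⟩

lemma KZintT_coeff {P : Polynomial (MvPolynomial (Fin n) ℚ_[p])} (h : P ∈ KZintT p n) (m : ℕ) :
    P.coeff m ∈ KZint p n := by
  have := (Polynomial.lifts_iff_coeff_lifts _).1 ((Polynomial.lifts_iff_liftsRing _ _).2 h) m
  exact this

lemma KZintT_of {P : Polynomial (MvPolynomial (Fin n) ℚ_[p])}
    (h : ∀ m, P.coeff m ∈ KZint p n) : P ∈ KZintT p n :=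
  (Polynomial.lifts_iff_liftsRing _ _).1 ((Polynomial.lifts_iff_coeff_lifts _).2 h)

lemma KZintT_C {a : MvPolynomial (Fin n) ℚ_[p]} (h : a ∈ KZint p n) :
    Polynomial.C a ∈ KZintT p n :=
  KZintT_of fun m => by
    rw [Polynomial.coeff_C]; split_ifs
    · exact h
    · exact zero_mem _

lemma KZintT_X : (Polynomial.X : Polynomial (MvPolynomial (Fin n) ℚ_[p])) ∈ KZintT p n :=
  KZintT_of fun m => by
    rw [Polynomial.coeff_X]; split_ifs
    · exact one_mem _
    · exact zero_mem _

lemma KZint_norm {f : MvPolynomial (Fin n) ℚ_[p]} (h : f ∈ KZint p n) (s : ℕ) (m : Fin n →₀ ℕ) :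
    ‖coeff m (C ((p : ℚ_[p]) ^ s) * f)‖ ≤ (p : ℝ) ^ (-(s : ℤ)) := by
  obtain ⟨q, rfl⟩ := h
  rw [coeff_C_mul, norm_mul, Padic.norm_p_pow]
  have : ‖coeff m ((MvPolynomial.map (PadicInt.Coe.ringHom (p := p))) q)‖ ≤ 1 := by
    rw [coeff_map]; exact (coeff m q).2
  exact mul_le_of_le_one_right (by positivity) this

lemma KZ_val_fact {k : ℕ} (hk : k ≠ 0) (_hp : 3 ≤ p) :
    (p - 1) * padicValNat p k.factorial < k :=
  sub_one_mul_padicValNat_factorial_lt_of_ne_zero p hk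

lemma KZ_norm_fact (k : ℕ) : ‖((k.factorial : ℕ) : ℚ_[p])‖ =
    (p : ℝ) ^ (-(padicValNat p k.factorial : ℤ)) := by
  rw [Padic.norm_eq_zpow_neg_valuation (by exact_mod_cast k.factorial_ne_zero),
    Padic.valuation_natCast]

lemma KZ_norm_le (lam : ℤ_[p]) (a k t : ℕ) (h : t + padicValNat p k.factorial ≤ a) (b : ℕ) :
    ‖(p : ℚ_[p]) ^ a * (lam : ℚ_[p]) ^ b / (k.factorial : ℚ_[p])‖ ≤ (p : ℝ) ^ (-(t : ℤ)) := by
  have hp1 : (1 : ℝ) ≤ p := by exact_mod_cast (Fact.out : p.Prime).one_lt.le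
  have hp0 : (p : ℝ) ≠ 0 := by positivity
  rw [norm_div, norm_mul, KZ_norm_fact, Padic.norm_p_pow, norm_pow, div_eq_mul_inv, ← zpow_neg]
  have hl : ‖(lam : ℚ_[p])‖ ^ b ≤ 1 := pow_le_one₀ (norm_nonneg _) lam.2
  calc _ ≤ (p : ℝ) ^ (-(a : ℤ)) * 1 * (p : ℝ) ^ (- -(padicValNat p k.factorial : ℤ)) := by gcongr
    _ = (p : ℝ) ^ (-(a : ℤ) + padicValNat p k.factorial) := by rw [mul_one, neg_neg, zpow_add₀ hp0]
    _ ≤ _ := zpow_le_zpow_right₀ hp1 (by omega)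

end

section
variable {p : ℕ} [Fact p.Prime] {s g : ℕ} {lam : ℤ_[p]}

lemma KZ_EsP_int (hp : 3 ≤ p) : EsP p s g lam ∈ KZintT p (2 * g + 1) := by
  refine sum_mem fun k _ => mul_mem (KZintT_C (KZint_C ?_)) (pow_mem KZintT_X _)
  have := KZ_norm_le (p := p) lam k k 0 ?_ k
  · simpa using this
  · rcases Nat.eq_zero_or_pos k with rfl | hk
    · simp
    · have := KZ_val_fact (p := p) hk.ne' hp
      have h2 : 1 * padicValNat p k.factorial ≤ (p - 1) * padicValNat p k.factorial :=
        Nat.mul_le_mul_right _ (by omega)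
      omega

lemma KZ_lin_int (n : ℕ) (i : Fin n) :
    (Polynomial.X - Polynomial.C (X i) : Polynomial (MvPolynomial (Fin n) ℚ_[p])) ∈ KZintT p n :=
  sub_mem KZintT_X (KZintT_C (KZint_X i))

lemma KZ_Psi_int (hp : 3 ≤ p) (i) : PsiComp p s g lam i ∈ KZintT p (2 * g + 1) :=
  mul_mem (mul_mem (KZ_EsP_int hp) (pow_mem (KZ_lin_int _ _) _))
    (prod_mem fun j _ => pow_mem (KZ_lin_int _ _) _)

lemma KZ_I_int (hp : 3 ≤ p) (l i) : Isol p s g lam l i ∈ KZint p (2 * g + 1) :=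
  KZintT_coeff (KZ_Psi_int hp i) _

lemma KZD_EsP (i) : KZD p _ i (EsP p s g lam) = 0 := by
  rw [EsP, map_sum]
  refine Finset.sum_eq_zero fun k _ => ?_
  rw [Derivation.leibniz, Derivation.leibniz_pow, KZD_X, KZD_C]
  simp

lemma KZ_der_exp (R : Type*) [Field R] [CharZero R] {σ : Type*} (a b : R) (d : ℕ) :
    Polynomial.derivative (∑ k ∈ Finset.range (d + 1),
      Polynomial.C (C (a ^ k * b ^ k / (k.factorial : R)) : MvPolynomial σ R) * Polynomial.X ^ k) =
    Polynomial.C (C (a * b)) * (∑ k ∈ Finset.range (d + 1),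
      Polynomial.C (C (a ^ k * b ^ k / (k.factorial : R))) * Polynomial.X ^ k) -
    Polynomial.C (C (a ^ (d + 1) * b ^ (d + 1) / (d.factorial : R))) * Polynomial.X ^ d := by
  induction d with
  | zero => simp
  | succ d ih =>
    rw [Finset.sum_range_succ, Polynomial.derivative_add, ih, mul_add,
      Polynomial.derivative_C_mul_X_pow]
    have h1 : (C (a ^ (d + 1) * b ^ (d + 1) / ((d + 1).factorial : R)) : MvPolynomial σ R) *
        ((d + 1 : ℕ) : MvPolynomial σ R) = C (a ^ (d + 1) * b ^ (d + 1) / (d.factorial : R)) := by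
      rw [← MvPolynomial.C_eq_coe_nat, ← C_mul]
      congr 1
      have : (d.factorial : R) ≠ 0 := by exact_mod_cast d.factorial_ne_zero
      have h2 : ((d + 1 : ℕ) : R) ≠ 0 := by exact_mod_cast d.succ_ne_zero
      rw [Nat.factorial_succ, Nat.cast_mul]
      field_simp
    have h3 : (C (a ^ (d + 1 + 1) * b ^ (d + 1 + 1) / ((d + 1).factorial : R)) :
        MvPolynomial σ R) = C (a * b) * C (a ^ (d + 1) * b ^ (d + 1) / ((d + 1).factorial : R)) := by
      rw [← C_mul]; congr 1; ring
    rw [h1, h3, Polynomial.C_mul, Nat.add_sub_cancel]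
    ring

lemma KZ_part1 (hp : 3 ≤ p) (hodd : Odd p) (hs : 0 < s) (l : ℕ) (i j : Fin (2 * g + 1))
    (hij : i ≠ j) : (X i - X j) * pderiv i (Isol p s g lam l j) -
          C ((2 : ℚ_[p])⁻¹) * (Isol p s g lam l i - Isol p s g lam l j) =
      C ((p : ℚ_[p]) ^ s) * (- C ((2 : ℚ_[p])⁻¹) * (Isol p s g lam l i - Isol p s g lam l j)) := by
  obtain ⟨N, hN⟩ : ∃ N, p ^ s = 2 * (N + 1) + 1 := by
    obtain ⟨m, hm⟩ := hodd.pow (n := s)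
    have : p ^ 1 ≤ p ^ s := Nat.pow_le_pow_right (by omega) hs
    rw [pow_one] at this
    exact ⟨m - 1, by omega⟩
  have hN1 : (p ^ s - 1) / 2 = N + 1 := by omega
  have key : (Polynomial.C (X i - X j)) * KZD p _ i (PsiComp p s g lam j) =
      Polynomial.C (C (-((N : ℚ_[p]) + 1))) * (PsiComp p s g lam i - PsiComp p s g lam j) := by
    have hi : i ∈ Finset.univ.erase j := by simp [hij]
    have hj : j ∈ Finset.univ.erase i := by simp [hij.symm]
    rw [PsiComp, PsiComp, ← Finset.mul_prod_erase _ _ hi, ← Finset.mul_prod_erase _ _ hj,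
      Finset.erase_right_comm, hN1, Nat.add_sub_cancel]
    have hR : KZD p _ i (∏ k ∈ (Finset.univ.erase i).erase j,
        (Polynomial.X - Polynomial.C (X k : MvPolynomial (Fin (2 * g + 1)) ℚ_[p])) ^ (N + 1)) = 0 := by
      refine Finset.prod_induction _ (fun P => KZD p _ i P = 0) ?_ ?_ ?_
      · intro a b ha hb
        rw [Derivation.leibniz, ha, hb]; simp
      · simp
      · intro k hk
        simp only [Finset.mem_erase] at hk
        rw [Derivation.leibniz_pow, KZD_lin, if_neg (Ne.symm hk.2.1)]; simp
    generalize (∏ k ∈ (Finset.univ.erase i).erase j,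
        (Polynomial.X - Polynomial.C (X k : MvPolynomial (Fin (2 * g + 1)) ℚ_[p])) ^ (N + 1)) = R
      at hR ⊢
    simp only [Derivation.leibniz, hR, KZD_EsP, Derivation.leibniz_pow, KZD_lin, if_neg hij,
      if_true, smul_eq_mul, Nat.add_sub_cancel, smul_zero, nsmul_eq_mul, mul_zero, add_zero,
      zero_add]
    simp only [map_neg, map_add, map_sub, map_one, map_natCast]
    push_cast
    ring
  have key2 := congrArg (fun P => P.coeff (l * p ^ s - 1)) key
  simp only [Polynomial.coeff_C_mul, KZD_coeff, Polynomial.coeff_sub] at key2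
  change (X i - X j) * pderiv i (Isol p s g lam l j) =
    C _ * (Isol p s g lam l i - Isol p s g lam l j) at key2
  rw [key2]
  have h2 : (-((N : ℚ_[p]) + 1)) = 2⁻¹ - p ^ s * 2⁻¹ := by
    have : (p : ℚ_[p]) ^ s = 2 * (N + 1) + 1 := by exact_mod_cast hN
    rw [this]; field_simp; ring
  rw [h2, C_sub, C_mul]
  ring

lemma KZ_part2 (hp : 3 ≤ p) (l : ℕ) (hl : 0 < l) (i : Fin (2 * g + 1)) :
    ∃ f ∈ KZint p (2 * g + 1), ∑ j, pderiv j (Isol p s g lam l i) -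
      C ((p : ℚ_[p]) * (lam : ℚ_[p])) * Isol p s g lam l i = C ((p : ℚ_[p]) ^ s) * f := by
  have hsum : ∀ P, (∑ j, KZD p (2 * g + 1) j) P = ∑ j, KZD p (2 * g + 1) j P := fun P => by
    rw [← Derivation.coeFnAddMonoidHom_apply, map_sum, Finset.sum_apply]; rfl
  set T := ∑ j, KZD p (2 * g + 1) j with hT
  set W : Polynomial (MvPolynomial (Fin (2 * g + 1)) ℚ_[p]) :=
    (Polynomial.X - Polynomial.C (X i)) ^ ((p ^ s - 1) / 2 - 1) *
    ∏ j ∈ Finset.univ.erase i, (Polynomial.X - Polynomial.C (X j)) ^ ((p ^ s - 1) / 2) with hW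
  have hPsi : PsiComp p s g lam i = EsP p s g lam * W := by rw [PsiComp, mul_assoc]
  have hWint : W ∈ KZintT p (2 * g + 1) :=
    mul_mem (pow_mem (KZ_lin_int _ _) _) (prod_mem fun j _ => pow_mem (KZ_lin_int _ _) _)
  have hlin : ∀ k (m : ℕ), T ((Polynomial.X - Polynomial.C (X k)) ^ m) +
      Polynomial.derivative ((Polynomial.X - Polynomial.C (X k)) ^ m) = 0 := by
    intro k m
    have : T (Polynomial.X - Polynomial.C (X k)) = -1 := by
      rw [hsum]; simp [KZD_lin]
    rw [Derivation.leibniz_pow, this, Polynomial.derivative_pow]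
    simp
    ring
  have hmul : ∀ P Q : Polynomial (MvPolynomial (Fin (2 * g + 1)) ℚ_[p]),
      T P + Polynomial.derivative P = 0 → T Q + Polynomial.derivative Q = 0 →
      T (P * Q) + Polynomial.derivative (P * Q) = 0 := by
    intro P Q hP hQ
    rw [Derivation.leibniz, Polynomial.derivative_mul, smul_eq_mul, smul_eq_mul]
    linear_combination Q * hP + P * hQ
  have hTW : T W + Polynomial.derivative W = 0 := by
    refine hmul _ _ (hlin _ _) ?_
    refine Finset.prod_induction _ (fun P => T P + Polynomial.derivative P = 0) hmul ?_ ?_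
    · simp
    · intro k _; exact hlin _ _
  have hTE : T (EsP p s g lam) = 0 := by
    rw [hsum]; exact Finset.sum_eq_zero fun j _ => KZD_EsP j
  set d := dTrunc p s with hd
  have hE' := KZ_der_exp ℚ_[p] (σ := Fin (2 * g + 1)) (p : ℚ_[p]) (lam : ℚ_[p]) d
  change Polynomial.derivative (EsP p s g lam) = _ * EsP p s g lam - _ at hE'
  have hnorm : ‖(p : ℚ_[p]) ^ (d + 1) * (lam : ℚ_[p]) ^ (d + 1) / (d.factorial : ℚ_[p])‖ ≤
      (p : ℝ) ^ (-(s : ℤ)) := by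
    refine KZ_norm_le lam _ _ _ ?_ _
    have hd0 : d ≠ 0 := by simp [hd, dTrunc]
    have hv := KZ_val_fact (p := p) hd0 hp
    have hlt : s * (p - 1) < d * (p - 2) := by
      rw [hd, dTrunc]; exact Nat.lt_mul_of_div_lt (Nat.lt_succ_self _) (by omega)
    obtain ⟨q, rfl⟩ : ∃ q, p = q + 2 := ⟨p - 2, by omega⟩
    simp only [Nat.add_sub_cancel, show q + 2 - 1 = q + 1 by omega] at hv hlt
    have : (q + 1) * (s + padicValNat (q + 2) d.factorial) < (q + 1) * (d + 1) := by nlinarith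
    exact (Nat.lt_of_mul_lt_mul_left this).le
  set c := (p : ℚ_[p]) ^ (d + 1) * (lam : ℚ_[p]) ^ (d + 1) / (d.factorial : ℚ_[p]) with hc
  have hp0 : (p : ℚ_[p]) ≠ 0 := by exact_mod_cast (Fact.out : p.Prime).ne_zero
  have hcc : c = (p : ℚ_[p]) ^ s * (c / (p : ℚ_[p]) ^ s) := by field_simp
  have hcn : ‖c / (p : ℚ_[p]) ^ s‖ ≤ 1 := by
    rw [norm_div, Padic.norm_p_pow]
    have : (0 : ℝ) < (p : ℝ) ^ (-(s : ℤ)) := by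
      have : (0 : ℝ) < p := by exact_mod_cast (Fact.out : p.Prime).pos
      positivity
    exact (div_le_one this).2 hnorm
  have main : T (PsiComp p s g lam i) = Polynomial.C (C ((p : ℚ_[p]) * (lam : ℚ_[p]))) *
      PsiComp p s g lam i - Polynomial.C (C c) * (Polynomial.X ^ d * W) -
      Polynomial.derivative (PsiComp p s g lam i) := by
    rw [hPsi, Derivation.leibniz, hTE, Polynomial.derivative_mul, hE', smul_eq_mul, smul_zero]
    linear_combination (EsP p s g lam) * hTW
  have m2 := congrArg (fun P => P.coeff (l * p ^ s - 1)) main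
  rw [hsum] at m2
  simp only [Polynomial.coeff_C_mul, Polynomial.finsetSum_coeff, KZD_coeff, Polynomial.coeff_sub,
    Polynomial.coeff_derivative] at m2
  have hpos : 0 < l * p ^ s := Nat.mul_pos hl (Nat.pow_pos (Fact.out : p.Prime).pos)
  rw [Nat.sub_add_cancel hpos] at m2
  refine ⟨-(C (c / (p : ℚ_[p]) ^ s) * (Polynomial.X ^ d * W).coeff (l * p ^ s - 1)) -
    (PsiComp p s g lam i).coeff (l * p ^ s) * (l : MvPolynomial (Fin (2 * g + 1)) ℚ_[p]), ?_, ?_⟩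
  · refine sub_mem (neg_mem (mul_mem (KZint_C hcn) (KZintT_coeff ?_ _)))
      (mul_mem (KZintT_coeff (KZ_Psi_int hp i) _) (natCast_mem _ _))
    exact mul_mem (pow_mem KZintT_X _) hWint
  · have e1 : (((l * p ^ s - 1 : ℕ) : MvPolynomial (Fin (2 * g + 1)) ℚ_[p]) + 1) =
        C ((p : ℚ_[p]) ^ s) * (l : MvPolynomial (Fin (2 * g + 1)) ℚ_[p]) := by
      rw [← Nat.cast_add_one, Nat.sub_add_cancel hpos]; simp [mul_comm]
    have e2 : (C c : MvPolynomial (Fin (2 * g + 1)) ℚ_[p]) =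
        C ((p : ℚ_[p]) ^ s) * C (c / (p : ℚ_[p]) ^ s) := by rw [← C_mul, ← hcc]
    rw [e1, e2] at m2
    change ∑ j, pderiv j (Isol p s g lam l i) = _ * Isol p s g lam l i - _ - _ at m2
    rw [m2]
    ring

end

/-- Let `λ ∈ ℤ_p` and `ℓ` a positive integer. Then `I^ℓ(z,λ)` satisfies the
KZ equations modulo `p^s`: for `i ≠ j`,
`(z_i−z_j)·(∂I^ℓ_j/∂z_i) ≡ (1/2)·(I^ℓ_i − I^ℓ_j) (mod p^s)`, and for each `i`,
`∏_{j≠i}(z_i−z_j)·(∂I^ℓ_i/∂z_i) ≡ pλ·∏_{j≠i}(z_i−z_j)·I^ℓ_i −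
(1/2)·Σ_{j≠i} ∏_{k≠i,j}(z_i−z_k)·(I^ℓ_i − I^ℓ_j) (mod p^s)`, where a congruence of
polynomials modulo `p^s` means every coefficient of the difference lies in `p^s ℤ_p`,
and `1/2` is the inverse of `2` in `ℤ_p`. -/
theorem kz_equations_mod_ps (p : ℕ) [Fact p.Prime] (hodd : Odd p)
    (s g : ℕ) (hs : 0 < s) (hg : 0 < g) (lam : ℤ_[p]) (l : ℕ) (hl : 0 < l) :
    (∀ i j : Fin (2 * g + 1), i ≠ j → ∀ mon : Fin (2 * g + 1) →₀ ℕ,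
      ‖coeff mon ((X i - X j) * pderiv i (Isol p s g lam l j) -
          C ((2 : ℚ_[p])⁻¹) * (Isol p s g lam l i - Isol p s g lam l j))‖ ≤
        (p : ℝ) ^ (-(s : ℤ))) ∧
    (∀ i : Fin (2 * g + 1), ∀ mon : Fin (2 * g + 1) →₀ ℕ,
      ‖coeff mon ((∏ j ∈ Finset.univ.erase i, (X i - X j)) * pderiv i (Isol p s g lam l i) -
          (C ((p : ℚ_[p]) * (lam : ℚ_[p])) * (∏ j ∈ Finset.univ.erase i, (X i - X j)) *
              Isol p s g lam l i -
            C ((2 : ℚ_[p])⁻¹) *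
              ∑ j ∈ Finset.univ.erase i,
                (∏ k ∈ (Finset.univ.erase i).erase j, (X i - X k)) *
                  (Isol p s g lam l i - Isol p s g lam l j)))‖ ≤
        (p : ℝ) ^ (-(s : ℤ))) := by
  have hp : 3 ≤ p := by
    have := (Fact.out : p.Prime).two_le
    obtain ⟨m, hm⟩ := hodd
    omega
  have h2 : ‖((2 : ℚ_[p])⁻¹)‖ ≤ 1 := by
    have h : ‖((2 : ℕ) : ℚ_[p])‖ = 1 := by
      rw [Padic.norm_natCast_eq_one_iff]
      exact (Nat.coprime_two_right.2 hodd)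
    rw [norm_inv]
    have h' : ‖(2 : ℚ_[p])‖ = 1 := by exact_mod_cast h
    rw [h']; simp
  refine ⟨fun i j hij mon => ?_, fun i mon => ?_⟩
  · rw [KZ_part1 hp hodd hs l i j hij]
    exact KZint_norm (mul_mem (neg_mem (KZint_C h2))
      (sub_mem (KZ_I_int hp _ _) (KZ_I_int hp _ _))) s mon
  · obtain ⟨f, hf, hfe⟩ := KZ_part2 (s := s) (lam := lam) hp l hl i
    rw [← Finset.add_sum_erase _ _ (Finset.mem_univ i)] at hfe
    have hfi : pderiv i (Isol p s g lam l i) = C ((p : ℚ_[p]) * (lam : ℚ_[p])) * Isol p s g lam l i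
        + C ((p : ℚ_[p]) ^ s) * f - ∑ j ∈ Finset.univ.erase i, pderiv j (Isol p s g lam l i) := by
      linear_combination hfe
    have hS : (∏ j ∈ Finset.univ.erase i, (X i - X j)) *
        ∑ j ∈ Finset.univ.erase i, pderiv j (Isol p s g lam l i) =
        C ((2 : ℚ_[p])⁻¹) * ∑ j ∈ Finset.univ.erase i,
          (∏ k ∈ (Finset.univ.erase i).erase j, (X i - X k)) *
            (Isol p s g lam l i - Isol p s g lam l j) +
        C ((p : ℚ_[p]) ^ s) * ∑ j ∈ Finset.univ.erase i,
          (∏ k ∈ (Finset.univ.erase i).erase j, (X i - X k)) *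
            (C ((2 : ℚ_[p])⁻¹) * (Isol p s g lam l j - Isol p s g lam l i)) := by
      rw [Finset.mul_sum, Finset.mul_sum, Finset.mul_sum, ← Finset.sum_add_distrib]
      refine Finset.sum_congr rfl fun j hj => ?_
      rw [← Finset.mul_prod_erase _ _ hj]
      have hji : j ≠ i := by simpa using hj
      have h1 := KZ_part1 (s := s) (lam := lam) hp hodd hs l j i hji
      linear_combination (-∏ k ∈ (Finset.univ.erase i).erase j, (X i - X k)) * h1
    have hprod : ∀ t : Finset (Fin (2 * g + 1)),
        (∏ k ∈ t, (X i - X k) : MvPolynomial (Fin (2 * g + 1)) ℚ_[p]) ∈ KZint p (2 * g + 1) :=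
      fun t => prod_mem fun k _ => sub_mem (KZint_X i) (KZint_X k)
    have hfinal := KZint_norm (sub_mem (mul_mem (hprod (Finset.univ.erase i)) hf)
      (sum_mem (t := Finset.univ.erase i) fun j _ =>
        mul_mem (hprod ((Finset.univ.erase i).erase j)) (mul_mem (KZint_C h2)
        (sub_mem (KZ_I_int (s := s) (lam := lam) hp l j) (KZ_I_int (s := s) (lam := lam) hp l i)))))
      s mon
    convert hfinal using 3
    rw [hfi]
    linear_combination -hS
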